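/- For n ≥ 3, Pval(L^n) ≤ 4·(λ/Δ)², where Δ is the largest eigenvalue and λ the spectral parameter of the adjacency matrix of the bipartite graph B_{n,2} whose vertex set is L^n_n ∪ L^n_2 with x ∈ L^n_n adjacent to t ∈ L^n_2 iff t ⊊ x. -/

import Mathlib

open Finset

abbrev F2 := ZMod 2
/-- `F2^{2n}`, split into the first and last `n` coordinates. -/
abbrev PV (n : ℕ) := (Fin n → F2) × (Fin n → F2)

/-- Symplectic product on `F2^{2n}`: zero iff `a₁·b₂ = a₂·b₁`. -/
def symp {n : ℕ} (a b : PV n) : F2 :=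
  (∑ i, a.1 i * b.2 i) + (∑ i, a.2 i * b.1 i)

/-- A subspace is isotropic if the symplectic product vanishes on it. -/
def IsIsotropic {n : ℕ} (S : Submodule F2 (PV n)) : Prop :=
  ∀ x ∈ S, ∀ y ∈ S, symp x y = 0

/-- `Lset n k` = `L^n_k`, the set of `k`-dimensional isotropic subspaces of `F2^{2n}`. -/
def Lset (n k : ℕ) : Set (Submodule F2 (PV n)) :=
  {S | IsIsotropic S ∧ Module.finrank F2 S = k}

/-- Integer lift of a vector over `F2`, with values in `{0,1} ⊆ ℤ`. -/
def liftZ {n : ℕ} (v : Fin n → F2) : Fin n → ℤ := fun i => ((v i).val : ℤ)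

def dotZ {n : ℕ} (a b : Fin n → ℤ) : ℤ := ∑ i, a i * b i

/-- The phase `i^{x̂₁·x̂₂} · i^{ŷ₁·ŷ₂} · i^{−((x+y)^^₁·(x+y)^^₂)} · (−1)^{x̂₂·ŷ₁}`. -/
noncomputable def phase {n : ℕ} (x y : PV n) : ℂ :=
  Complex.I ^ (dotZ (liftZ x.1) (liftZ x.2)) *
  Complex.I ^ (dotZ (liftZ y.1) (liftZ y.2)) *
  Complex.I ^ (-(dotZ (liftZ (x + y).1) (liftZ (x + y).2))) *
  (-1 : ℂ) ^ (dotZ (liftZ x.2) (liftZ y.1))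

/-- `w(x,y) ∈ {0,1} ⊆ F2`: zero iff the phase equals `1`. -/
noncomputable def wght {n : ℕ} (x y : PV n) : F2 :=
  if phase x y = 1 then 0 else 1

/-- An outcome of an isotropic subspace `S` is `f : S → F2` with
`f(x+y) = f(x)+f(y)+w(x,y)`. -/
def IsOutcome {n : ℕ} (S : Submodule F2 (PV n)) (f : S → F2) : Prop :=
  ∀ x y : S, f (x + y) = f x + f y + wght (x : PV n) (y : PV n)

/-- Two outcomes are consistent if they agree on the intersection of their domains. -/
def ConsistentOn {n : ℕ} {S₁ S₂ : Submodule F2 (PV n)} (f₁ : S₁ → F2) (f₂ : S₂ → F2) : Prop :=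
  ∀ v (h1 : v ∈ S₁) (h2 : v ∈ S₂), f₁ ⟨v, h1⟩ = f₂ ⟨v, h2⟩

open scoped Classical

noncomputable instance {n : ℕ} : Fintype (Submodule F2 (PV n)) := by
  have : Finite (Submodule F2 (PV n)) :=
    Finite.of_injective (fun S => (S : Set (PV n))) SetLike.coe_injective
  exact Fintype.ofFinite _

/-- Adjacency matrix (over `ℝ`) of the graph with adjacency relation `Adj`. -/
noncomputable def adjMat {V : Type*} [Fintype V] (Adj : V → V → Prop) : Matrix V V ℝ :=
  fun x y => if Adj x y then 1 else 0

/-- The set of eigenvalues of a matrix. -/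
def eigSet {V : Type*} [Fintype V] (A : Matrix V V ℝ) : Set ℝ :=
  {μ | ∃ v : V → ℝ, v ≠ 0 ∧ A.mulVec v = μ • v}

/-- The largest eigenvalue. -/
noncomputable def maxEig {V : Type*} [Fintype V] (A : Matrix V V ℝ) : ℝ :=
  sSup (eigSet A)

/-- The spectral parameter: the second largest element of `{|μ| : μ ∈ Spec(A)}`. -/
noncomputable def specParam {V : Type*} [Fintype V] (A : Matrix V V ℝ) : ℝ :=
  sSup ((abs '' eigSet A) \ {sSup (abs '' eigSet A)})

/-- Vertices of the bipartite graph `B_{n,2}`: `L^n_n ∪ L^n_2`. -/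
abbrev BVtx (n : ℕ) := {S : Submodule F2 (PV n) // S ∈ Lset n n ∪ Lset n 2}

/-- Adjacency in `B_{n,2}`: `x ∈ L^n_n` is adjacent to `t ∈ L^n_2` iff `t ⊊ x`. -/
def BAdj {n : ℕ} (x y : BVtx n) : Prop :=
  (x.1 ∈ Lset n 2 ∧ y.1 ∈ Lset n n ∧ x.1 < y.1) ∨
  (y.1 ∈ Lset n 2 ∧ x.1 ∈ Lset n n ∧ y.1 < x.1)

/-- The adjacency matrix of `B_{n,2}`. -/
noncomputable def adjB (n : ℕ) : Matrix (BVtx n) (BVtx n) ℝ := adjMat BAdj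

/-! ### Part A: spectral estimates -/

theorem spec_estimate {V : Type*} [Fintype V] (A : Matrix V V ℝ) (hA : A.IsHermitian)
    (hb : BddAbove (abs '' eigSet A)) (u : V → ℝ)
    (hu : ∀ μ (v : V → ℝ), A.mulVec v = μ • v → |μ| = sSup (abs '' eigSet A) →
      ∑ x, v x * u x = 0) :
    ∑ x, (A.mulVec u x) ^ 2 ≤ specParam A ^ 2 * ∑ x, u x ^ 2 := by
  classical
  set b := hA.eigenvectorBasis with hbdef
  have key : ∀ w : V → ℝ, ∑ x, w x ^ 2 = ∑ i, (∑ x, (b i).ofLp x * w x) ^ 2 := by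
    intro w
    have h := b.sum_sq_norm_inner_right (WithLp.toLp 2 w)
    rw [EuclideanSpace.norm_sq_eq] at h
    simp only [Real.norm_eq_abs, sq_abs] at h
    rw [← h]
    refine Finset.sum_congr rfl fun i _ => ?_
    congr 1
    simp [PiLp.inner_apply, mul_comm]
  have heig : ∀ i, A.mulVec (b i).ofLp = hA.eigenvalues i • (b i).ofLp := by
    intro i
    exact hA.mulVec_eigenvectorBasis i
  have hAu : ∀ i, ∑ x, (b i).ofLp x * A.mulVec u x
      = hA.eigenvalues i * ∑ x, (b i).ofLp x * u x := by
    intro i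
    have h1 : (b i).ofLp ⬝ᵥ A.mulVec u = (A.mulVec (b i).ofLp) ⬝ᵥ u := by
      rw [Matrix.dotProduct_mulVec, ← Matrix.mulVec_transpose]
      have : A.transpose = A := by simpa using hA.eq
      rw [this]
    rw [heig i, smul_dotProduct] at h1
    simpa [dotProduct] using h1
  rw [key u, key (A.mulVec u), Finset.mul_sum]
  refine Finset.sum_le_sum fun i _ => ?_
  rw [hAu i, mul_pow]
  by_cases hm : |hA.eigenvalues i| = sSup (abs '' eigSet A)
  · rw [hu _ _ (heig i) hm]; simp
  · refine mul_le_mul_of_nonneg_right ?_ (sq_nonneg _)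
    have hne : (b i).ofLp ≠ 0 := by
      intro h0
      have := b.orthonormal.ne_zero i
      apply this
      ext x; simpa using congrFun h0 x
    have hmem : |hA.eigenvalues i| ∈ (abs '' eigSet A) \ {sSup (abs '' eigSet A)} :=
      ⟨⟨_, ⟨_, hne, heig i⟩, rfl⟩, hm⟩
    have hle : |hA.eigenvalues i| ≤ specParam A := le_csSup (hb.mono Set.sdiff_subset) hmem
    rw [← sq_abs]
    exact pow_le_pow_left₀ (abs_nonneg _) hle 2

theorem norm_identity {V : Type*} [Fintype V] (Adj : V → V → Prop)
    (hsymm : ∀ x y, Adj x y → Adj y x) (d : V → ℝ) (e : ℝ)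
    (hd : ∀ x, ∑ y, adjMat Adj x y = d x)
    (hde : ∀ x, ∑ y, adjMat Adj x y * d y = e) (v : V → ℝ) :
    e * ∑ x, v x ^ 2 - ∑ z, ((adjMat Adj).mulVec v z) ^ 2 =
      (1 / 2) * ∑ z, ∑ x, ∑ y, adjMat Adj z x * adjMat Adj z y * (v x - v y) ^ 2 := by
  have hs : ∀ x y, adjMat Adj x y = adjMat Adj y x := by
    intro x y
    have : Adj x y ↔ Adj y x := ⟨hsymm _ _, hsymm _ _⟩
    simp [adjMat, this]
  have h1 : ∀ z, ∑ x, ∑ y, adjMat Adj z x * adjMat Adj z y * (v x - v y) ^ 2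
      = 2 * (d z * ∑ x, adjMat Adj z x * v x ^ 2) - 2 * ((adjMat Adj).mulVec v z) ^ 2 := by
    intro z
    have e1 : ((adjMat Adj).mulVec v z) ^ 2
        = ∑ x, ∑ y, adjMat Adj z x * adjMat Adj z y * (v x * v y) := by
      rw [sq, Matrix.mulVec, dotProduct, Finset.sum_mul_sum]
      refine Finset.sum_congr rfl fun x _ => Finset.sum_congr rfl fun y _ => by ring
    have e2 : d z * ∑ x, adjMat Adj z x * v x ^ 2
        = ∑ x, ∑ y, adjMat Adj z x * adjMat Adj z y * (v x ^ 2) := by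
      rw [← hd z, mul_comm, Finset.sum_mul_sum]
      refine Finset.sum_congr rfl fun x _ => Finset.sum_congr rfl fun y _ => by ring
    have e3 : d z * ∑ x, adjMat Adj z x * v x ^ 2
        = ∑ x, ∑ y, adjMat Adj z x * adjMat Adj z y * (v y ^ 2) := by
      rw [← hd z, Finset.sum_mul_sum]
      refine Finset.sum_congr rfl fun x _ => Finset.sum_congr rfl fun y _ => by ring
    have : 2 * (d z * ∑ x, adjMat Adj z x * v x ^ 2)
      = d z * ∑ x, adjMat Adj z x * v x ^ 2 + d z * ∑ x, adjMat Adj z x * v x ^ 2 := by ring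
    rw [this]
    nth_rewrite 1 [e2]
    rw [e3, e1, Finset.mul_sum, ← Finset.sum_add_distrib, ← Finset.sum_sub_distrib]
    refine Finset.sum_congr rfl fun x _ => ?_
    rw [Finset.mul_sum, ← Finset.sum_add_distrib, ← Finset.sum_sub_distrib]
    refine Finset.sum_congr rfl fun y _ => by ring
  have h2 : ∑ z, d z * ∑ x, adjMat Adj z x * v x ^ 2 = e * ∑ x, v x ^ 2 := by
    simp only [Finset.mul_sum]
    rw [Finset.sum_comm]
    refine Finset.sum_congr rfl fun x _ => ?_
    rw [← hde x, Finset.sum_mul]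
    refine Finset.sum_congr rfl fun y _ => ?_
    rw [hs x y]; ring
  rw [Finset.sum_congr rfl fun z _ => h1 z, Finset.sum_sub_distrib, ← Finset.mul_sum,
    ← Finset.mul_sum, h2]
  ring

set_option maxHeartbeats 2000000 in
theorem abstract_bound {V : Type*} [Fintype V] (Adj : V → V → Prop)
    (hsymm : ∀ x y, Adj x y → Adj y x) (L : V → Prop)
    (hbip : ∀ x y, Adj x y → (L x ↔ ¬ L y)) (dL dR : ℝ) (hdL : 0 < dL) (hdR : 0 < dR)
    (hL : ∀ x, L x → ∑ y, adjMat Adj x y = dL)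
    (hR : ∀ x, ¬ L x → ∑ y, adjMat Adj x y = dR)
    (hconn : ∀ ψ : V → ℝ, (∀ x y t, L x → L y → Adj t x → Adj t y → ψ x = ψ y) →
      ∀ x y, L x → L y → ψ x = ψ y)
    (D G : Finset V) (hD : ∀ x ∈ D, L x) (hDne : D.Nonempty) (hG : ∀ x ∈ G, ¬ L x)
    (hDG : ∀ x ∈ D, ∀ t, Adj x t → t ∈ G)
    (hcard : 5 * (#G : ℝ) ≤ 4 * (#{x | ¬ L x} : ℝ)) :
    (#D : ℝ) / (#{x | L x} : ℝ) ≤ 4 * (specParam (adjMat Adj) / maxEig (adjMat Adj)) ^ 2 := by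
  set A := adjMat Adj with hAdef
  have hs : ∀ x y, A x y = A y x := by
    intro x y
    have : Adj x y ↔ Adj y x := ⟨hsymm _ _, hsymm _ _⟩
    simp [hAdef, adjMat, this]
  have hA0 : ∀ x y, 0 ≤ A x y := by
    intro x y; simp only [hAdef, adjMat]; split_ifs <;> norm_num
  have hA1 : ∀ x y, Adj x y → A x y = 1 := by
    intro x y h; simp [hAdef, adjMat, h]
  have hAz : ∀ x y, ¬ Adj x y → A x y = 0 := by
    intro x y h; simp [hAdef, adjMat, h]
  have hH : A.IsHermitian := by
    ext x y; simp [hs x y]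
  let d : V → ℝ := fun x => if L x then dL else dR
  have hd : ∀ x, ∑ y, A x y = d x := by
    intro x
    by_cases h : L x
    · simp [d, h, hL x h]
    · simp [d, h, hR x h]
  have hAL : ∀ (p q : ℝ) x, ∑ y, A x y * (if L y then p else q) = if L x then dL * q else dR * p := by
    intro p q x
    by_cases h : L x
    · rw [if_pos h, ← hL x h, Finset.sum_mul]
      refine Finset.sum_congr rfl fun y _ => ?_
      by_cases hxy : Adj x y
      · rw [if_neg ((hbip x y hxy).1 h)]
      · simp [hAz x y hxy]
    · rw [if_neg h, ← hR x h, Finset.sum_mul]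
      refine Finset.sum_congr rfl fun y _ => ?_
      by_cases hxy : Adj x y
      · rw [if_pos (by by_contra h'; exact h ((hbip x y hxy).2 h'))]
      · simp [hAz x y hxy]
  set e := dL * dR with he
  have hepos : 0 < e := mul_pos hdL hdR
  have hde : ∀ x, ∑ y, A x y * d y = e := by
    intro x
    rw [hAL dL dR x]
    split_ifs
    · rfl
    · rw [he, mul_comm]
  have hid := norm_identity Adj hsymm d e hd hde
  rw [← hAdef] at hid
  have hnn : ∀ v : V → ℝ, ∀ z x y, 0 ≤ A z x * A z y * (v x - v y) ^ 2 := fun v z x y =>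
    mul_nonneg (mul_nonneg (hA0 _ _) (hA0 _ _)) (sq_nonneg _)
  have hnorm : ∀ μ (v : V → ℝ), A.mulVec v = μ • v →
      ∑ z, (A.mulVec v z) ^ 2 = μ ^ 2 * ∑ x, v x ^ 2 := by
    intro μ v h
    rw [h, Finset.mul_sum]
    refine Finset.sum_congr rfl fun x _ => by simp [mul_pow]
  -- eigenvalue bound
  have hev : ∀ μ ∈ eigSet A, |μ| ≤ √e := by
    rintro μ ⟨v, hv, hμ⟩
    have h1 := hid v
    rw [hnorm μ v hμ] at h1
    have h2 : 0 ≤ (1 / 2 : ℝ) * ∑ z, ∑ x, ∑ y, A z x * A z y * (v x - v y) ^ 2 :=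
      mul_nonneg (by norm_num) (Finset.sum_nonneg fun z _ => Finset.sum_nonneg fun x _ =>
        Finset.sum_nonneg fun y _ => hnn v z x y)
    have h3 : 0 < ∑ x, v x ^ 2 := by
      obtain ⟨x, hx⟩ := Function.ne_iff.1 hv
      refine Finset.sum_pos' (fun i _ => sq_nonneg _) ⟨x, Finset.mem_univ _, ?_⟩
      have : v x ≠ 0 := hx
      positivity
    apply Real.abs_le_sqrt
    by_contra hlt
    push Not at hlt
    nlinarith
  have hpair : ∃ x y, L x ∧ ¬ L y := by
    obtain ⟨x, hx⟩ := hDne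
    have h := hL x (hD x hx)
    obtain ⟨y, -, hy⟩ : ∃ y ∈ Finset.univ, A x y ≠ 0 := by
      apply Finset.exists_ne_zero_of_sum_ne_zero
      rw [h]; exact hdL.ne'
    have : Adj x y := by
      by_contra h'; exact hy (hAz _ _ h')
    exact ⟨x, y, hD x hx, (hbip x y this).1 (hD x hx)⟩
  have hmem : √e ∈ eigSet A := by
    refine ⟨fun x => if L x then √dL else √dR, ?_, ?_⟩
    · obtain ⟨x, y, hx, hy⟩ := hpair
      intro h0
      have := congrFun h0 x
      simp only [hx, if_true, Pi.zero_apply] at this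
      exact (Real.sqrt_pos.2 hdL).ne' this
    · funext x
      have := hAL (√dL) (√dR) x
      simp only [Matrix.mulVec, dotProduct, Pi.smul_apply, smul_eq_mul]
      rw [this, he, Real.sqrt_mul hdL.le]
      split_ifs
      · nth_rewrite 1 [← Real.mul_self_sqrt hdL.le]; ring
      · nth_rewrite 1 [← Real.mul_self_sqrt hdR.le]; ring
  have hmax : maxEig A = √e :=
    IsGreatest.csSup_eq ⟨hmem, fun μ hμ => (le_abs_self μ).trans (hev μ hμ)⟩
  have habs : IsGreatest (abs '' eigSet A) (√e) := by
    refine ⟨⟨_, hmem, abs_of_nonneg (Real.sqrt_nonneg _)⟩, ?_⟩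
    rintro _ ⟨μ, hμ, rfl⟩
    exact hev μ hμ
  set N : ℝ := (#{x | L x} : ℝ) with hN
  set R : ℝ := (#{x | ¬ L x} : ℝ) with hRdef
  have hNpos : 0 < N := by
    obtain ⟨x, y, hx, hy⟩ := hpair
    rw [hN]; exact_mod_cast Finset.card_pos.2 ⟨x, by simp [hx]⟩
  set δ : ℝ := (#D : ℝ) / N with hδ
  have hδN : δ * N = #D := by rw [hδ]; field_simp
  have hDpos : (0 : ℝ) < #D := by exact_mod_cast Finset.card_pos.2 hDne
  have hδpos : 0 < δ := div_pos hDpos hNpos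
  let u : V → ℝ := fun x => (if x ∈ D then 1 else 0) - (if L x then δ else 0)
  have hsumD : ∑ x, (if x ∈ D then (1 : ℝ) else 0) = #D := by simp
  have hsumL : ∀ c : ℝ, ∑ x, (if L x then c else 0) = N * c := by
    intro c; rw [← Finset.sum_filter, Finset.sum_const, nsmul_eq_mul]
  have hsumR : ∀ c : ℝ, ∑ x, (if L x then 0 else c) = R * c := by
    intro c
    have : ∀ x, (if L x then 0 else c) = if ¬ L x then c else 0 := by
      intro x; by_cases h : L x <;> simp [h]
    simp only [this]
    rw [← Finset.sum_filter, Finset.sum_const, nsmul_eq_mul]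
  have hspec := spec_estimate A hH habs.bddAbove u (by
    intro μ v hμ hm
    rw [habs.csSup_eq] at hm
    have hμ2 : μ ^ 2 = e := by rw [← sq_abs, hm, Real.sq_sqrt hepos.le]
    have h1 := hid v
    rw [hnorm μ v hμ, hμ2, sub_self] at h1
    have h2 : ∑ z, ∑ x, ∑ y, A z x * A z y * (v x - v y) ^ 2 = 0 := by linarith
    have hc : ∀ x y, L x → L y → v x = v y := by
      apply hconn
      intro x y t _ _ hx hy
      rw [Finset.sum_eq_zero_iff_of_nonneg (fun z _ => Finset.sum_nonneg fun x _ =>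
        Finset.sum_nonneg fun y _ => hnn v z x y)] at h2
      have h3 := h2 t (Finset.mem_univ _)
      rw [Finset.sum_eq_zero_iff_of_nonneg (fun x _ =>
        Finset.sum_nonneg fun y _ => hnn v t x y)] at h3
      have h4 := h3 x (Finset.mem_univ _)
      rw [Finset.sum_eq_zero_iff_of_nonneg (fun y _ => hnn v t x y)] at h4
      have h5 := h4 y (Finset.mem_univ _)
      rw [hA1 t x hx, hA1 t y hy] at h5
      have : (v x - v y) ^ 2 = 0 := by linarith
      have := pow_eq_zero_iff (two_ne_zero) |>.1 this
      linarith
    obtain ⟨x0, y0, hx0, -⟩ := hpair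
    have : ∀ x, v x * u x = v x0 * u x := by
      intro x
      by_cases hx : L x
      · rw [hc x x0 hx hx0]
      · have : x ∉ D := fun h => hx (hD x h)
        simp [u, hx, this]
    rw [Finset.sum_congr rfl fun x _ => this x, ← Finset.mul_sum]
    have : ∑ x, u x = 0 := by
      simp only [u]
      rw [Finset.sum_sub_distrib, hsumD, hsumL, ← hδN]; ring
    rw [this, mul_zero])
  -- norm of u
  have hu2 : ∑ x, u x ^ 2 = #D - δ * #D := by
    have : ∀ x, u x ^ 2 = (if x ∈ D then (1 : ℝ) else 0) * (1 - 2 * δ)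
        + (if L x then δ ^ 2 else 0) := by
      intro x
      by_cases hx : x ∈ D
      · simp [u, hx, hD x hx]; ring
      · by_cases hl : L x <;> simp [u, hx, hl]
    rw [Finset.sum_congr rfl fun x _ => this x, Finset.sum_add_distrib, ← Finset.sum_mul, hsumD,
      hsumL, ← hδN]
    ring
  let h : V → ℝ := fun t => ∑ x, A t x * (if x ∈ D then 1 else 0)
  have hh0 : ∀ t, t ∉ G → h t = 0 := by
    intro t ht
    refine Finset.sum_eq_zero fun x _ => ?_
    by_cases hx : x ∈ D
    · have : ¬ Adj t x := fun h' => ht (hDG x hx t (hsymm _ _ h'))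
      simp [hAz _ _ this]
    · simp [hx]
  have hsumh : ∑ t, h t = #D * dL := by
    simp only [h]
    rw [Finset.sum_comm, ← hsumD, Finset.sum_mul]
    refine Finset.sum_congr rfl fun x _ => ?_
    rw [← Finset.sum_mul]
    by_cases hx : x ∈ D
    · rw [if_pos hx, mul_one, one_mul, ← hL x (hD x hx)]
      exact Finset.sum_congr rfl fun y _ => hs _ _
    · simp [hx]
  have hRdR : R * dR = N * dL := by
    rw [← hsumR, ← hsumL]
    have e1 : ∑ x, ∑ y, A x y * (if L y then (1:ℝ) else 0) = ∑ x, (if L x then 0 else dR) := by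
      refine Finset.sum_congr rfl fun x _ => ?_
      rw [hAL 1 0 x]; simp
    have e2 : ∑ y, ∑ x, A x y * (if L y then (1:ℝ) else 0) = ∑ x, (if L x then dL else 0) := by
      refine Finset.sum_congr rfl fun y _ => ?_
      rw [← Finset.sum_mul, Finset.sum_congr rfl fun x _ => hs x y, hd y]
      by_cases hl : L y <;> simp [d, hl]
    rw [← e1, ← e2, Finset.sum_comm]
  have hAu : ∑ x, (A.mulVec u x) ^ 2 = ∑ t, h t ^ 2 - e * δ * #D := by
    have e1 : ∀ t, A.mulVec u t = h t - (if L t then 0 else δ * dR) := by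
      intro t
      have := hAL δ 0 t
      simp only [Matrix.mulVec, dotProduct, u, mul_sub, Finset.sum_sub_distrib, h]
      rw [this, mul_zero, mul_comm dR]
    have e2 : ∀ t, (A.mulVec u t) ^ 2 = h t ^ 2 - (2 * δ * dR) * h t
        + (if L t then 0 else (δ * dR) ^ 2) := by
      intro t
      rw [e1]
      by_cases hl : L t
      · have : h t = 0 := hh0 t (fun hg => hG t hg hl)
        simp [hl, this]
      · simp [hl]; ring
    rw [Finset.sum_congr rfl fun x _ => e2 x, Finset.sum_add_distrib, Finset.sum_sub_distrib,
      ← Finset.mul_sum, hsumh, hsumR, he]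
    have : R * (δ * dR) ^ 2 = (R * dR) * δ ^ 2 * dR := by ring
    rw [this, hRdR]
    have : N * dL * δ ^ 2 * dR = (δ * N) * dL * δ * dR := by ring
    rw [this, hδN]; ring
  have hCS : (#D * dL) ^ 2 ≤ #G * ∑ t, h t ^ 2 := by
    have e1 : ∑ t ∈ G, h t = ∑ t, h t :=
      Finset.sum_subset (Finset.subset_univ _) fun t _ ht => hh0 t ht
    rw [← hsumh, ← e1]
    refine sq_sum_le_card_mul_sum_sq.trans ?_
    refine mul_le_mul_of_nonneg_left ?_ (Nat.cast_nonneg _)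
    exact Finset.sum_le_sum_of_subset_of_nonneg (Finset.subset_univ _) fun _ _ _ => sq_nonneg _
  set l := specParam A with hl
  rw [hAu, hu2] at hspec
  rw [hmax, div_pow, Real.sq_sqrt hepos.le, ← mul_div_assoc, le_div_iff₀ hepos]
  set H := ∑ t, h t ^ 2 with hH'
  have hHle : H ≤ e * δ * #D + l ^ 2 * (#D - δ * #D) := by linarith
  have hH0 : 0 ≤ H := Finset.sum_nonneg fun _ _ => sq_nonneg _
  have f1 : 5 * (#D * dL) ^ 2 ≤ 4 * R * (e * δ * #D + l ^ 2 * (#D - δ * #D)) := by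
    have a1 : 5 * (#G * H) ≤ 4 * R * H := by nlinarith
    have a2 : 4 * R * H ≤ 4 * R * (e * δ * #D + l ^ 2 * (#D - δ * #D)) :=
      mul_le_mul_of_nonneg_left hHle (by positivity)
    linarith
  have f2 : 5 * (δ * e) ≤ 4 * (e * δ + l ^ 2 * (1 - δ)) := by
    have hpos : 0 < N * dL * #D := by positivity
    have a3 : 5 * (#D * dL) ^ 2 * dR = (N * dL * #D) * (5 * (δ * e)) := by
      rw [he, ← hδN]; ring
    have a4 : 4 * R * (e * δ * #D + l ^ 2 * (#D - δ * #D)) * dR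
        = (N * dL * #D) * (4 * (e * δ + l ^ 2 * (1 - δ))) := by
      rw [← hRdR]; ring
    have a5 := mul_le_mul_of_nonneg_right f1 hdR.le
    rw [a3, a4] at a5
    exact le_of_mul_le_mul_left a5 hpos
  nlinarith [mul_nonneg (sq_nonneg l) hδpos.le]

/-! ### Part B: symplectic linear algebra -/

theorem symp_comm {n : ℕ} (a b : PV n) : symp a b = symp b a := by
  unfold symp
  rw [add_comm]
  congr 1 <;> exact Finset.sum_congr rfl fun i _ => mul_comm _ _

theorem symp_add_left {n : ℕ} (a b c : PV n) : symp (a + b) c = symp a c + symp b c := by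
  simp only [symp, Prod.fst_add, Prod.snd_add, Pi.add_apply, add_mul, Finset.sum_add_distrib]
  ring

theorem symp_add_right {n : ℕ} (a b c : PV n) : symp a (b + c) = symp a b + symp a c := by
  rw [symp_comm, symp_add_left, symp_comm b, symp_comm c]

theorem symp_smul_left {n : ℕ} (r : F2) (a c : PV n) : symp (r • a) c = r * symp a c := by
  simp only [symp, Prod.smul_fst, Prod.smul_snd, Pi.smul_apply, smul_eq_mul, mul_add,
    Finset.mul_sum, mul_assoc]

theorem symp_smul_right {n : ℕ} (r : F2) (a c : PV n) : symp a (r • c) = r * symp a c := by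
  rw [symp_comm, symp_smul_left, symp_comm]

theorem symp_self {n : ℕ} (a : PV n) : symp a a = 0 := by
  unfold symp
  have : ∑ i, a.2 i * a.1 i = ∑ i, a.1 i * a.2 i := Finset.sum_congr rfl fun i _ => mul_comm _ _
  rw [this]
  exact CharTwo.add_self_eq_zero _

/-- The symplectic product as a linear map in the second argument. -/
def sympL {n : ℕ} (a : PV n) : PV n →ₗ[F2] F2 where
  toFun b := symp a b
  map_add' := symp_add_right a
  map_smul' r b := symp_smul_right r a b

theorem symp_zero_right {n : ℕ} (a : PV n) : symp a 0 = 0 := (sympL a).map_zero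

theorem symp_zero_left {n : ℕ} (a : PV n) : symp 0 a = 0 := by
  rw [symp_comm, symp_zero_right]

theorem symp_sum_left {n : ℕ} {ι : Type*} (s : Finset ι) (v : ι → PV n) (b : PV n) :
    symp (∑ i ∈ s, v i) b = ∑ i ∈ s, symp (v i) b := by
  simp only [symp_comm _ b]
  exact map_sum (sympL b) v s

theorem symp_nondeg {n : ℕ} (a : PV n) (h : ∀ b, symp a b = 0) : a = 0 := by
  ext i
  · have := h (0, Pi.single i 1)
    simpa [symp, Pi.single_apply] using this
  · have := h (Pi.single i 1, 0)
    simpa [symp, Pi.single_apply] using this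

theorem card_PV (n : ℕ) : Fintype.card (PV n) = 2 ^ (2 * n) := by
  simp [ZMod.card, two_mul, pow_add]

theorem card_fiber {n k : ℕ} (v : Fin k → PV n) (hv : LinearIndependent F2 v) (c : Fin k → F2) :
    #{f : PV n | ∀ i, symp (v i) f = c i} * 2 ^ k = 2 ^ (2 * n) := by
  let φ : PV n →ₗ[F2] (Fin k → F2) := LinearMap.pi fun i => sympL (v i)
  have hφ : ∀ f i, φ f i = symp (v i) f := fun f i => rfl
  have hsurj : Function.Surjective φ := by
    rw [← LinearMap.range_eq_top]
    by_contra hne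
    obtain ⟨g, hg0, hg⟩ := Submodule.exists_le_ker_of_lt_top _ (lt_top_iff_ne_top.2 hne)
    apply hg0
    have h1 : ∀ f, ∑ i, g (Pi.single i 1) * symp (v i) f = 0 := by
      intro f
      have : g (φ f) = 0 := hg ⟨f, rfl⟩
      rw [LinearMap.pi_apply_eq_sum_univ g (φ f)] at this
      rw [← this]
      refine Finset.sum_congr rfl fun i _ => ?_
      rw [hφ, smul_eq_mul, mul_comm]
      congr 2
      funext j
      simp [Pi.single_apply, eq_comm]
    have h2 : ∑ i, g (Pi.single i 1) • v i = 0 := by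
      apply symp_nondeg
      intro f
      rw [symp_sum_left, ← h1 f]
      exact Finset.sum_congr rfl fun i _ => symp_smul_left _ _ _
    have h3 := Fintype.linearIndependent_iff.1 hv _ h2
    apply LinearMap.pi_ext'
    intro i
    ext
    simpa using h3 i
  have hfib : ∀ c' : Fin k → F2, #{f | φ f = c'} = #{f | φ f = c} := fun c' =>
    AddMonoidHom.card_fiber_eq_of_mem_range φ (hsurj c') (hsurj c)
  have htot : ∑ c' : Fin k → F2, #{f | φ f = c'} = Fintype.card (PV n) := by
    rw [← Finset.card_univ]
    exact (Finset.card_eq_sum_card_fiberwise (fun _ _ => Finset.mem_coe.2 (Finset.mem_univ _))).symm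
  rw [Finset.sum_congr rfl fun c' _ => hfib c', Finset.sum_const, card_PV] at htot
  have hset : ({f : PV n | ∀ i, symp (v i) f = c i} : Finset (PV n))
      = ({f | φ f = c} : Finset (PV n)) := by
    ext f
    simp only [Finset.mem_filter, Finset.mem_univ, true_and, funext_iff, hφ]
  rw [hset, ← htot]
  simp [mul_comm, ZMod.card]

theorem card_orth {n : ℕ} (S : Submodule F2 (PV n)) :
    #{f : PV n | ∀ x ∈ S, symp x f = 0} * 2 ^ (Module.finrank F2 S) = 2 ^ (2 * n) := by
  let b := Module.finBasis F2 S
  have hv : LinearIndependent F2 (fun i => (b i : PV n)) :=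
    b.linearIndependent.map' S.subtype (Submodule.ker_subtype S)
  rw [← card_fiber _ hv 0]
  congr 2
  ext f
  simp only [Finset.mem_filter, Finset.mem_univ, true_and, Pi.zero_apply]
  constructor
  · intro h i; exact h _ (b i).2
  · intro h x hx
    have := b.sum_repr ⟨x, hx⟩
    have h2 : x = ∑ i, (b.repr ⟨x, hx⟩ i) • (b i : PV n) := by
      have h3 := congrArg (Subtype.val) this
      rw [Submodule.coe_sum] at h3
      exact h3.symm
    rw [h2, symp_sum_left]
    refine Finset.sum_eq_zero fun i _ => ?_
    rw [symp_smul_left, h i, mul_zero]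

theorem card_sub {n : ℕ} (S : Submodule F2 (PV n)) :
    #{f : PV n | f ∈ S} = 2 ^ (Module.finrank F2 S) := by
  have := Module.card_eq_pow_finrank (K := F2) (V := S)
  rw [ZMod.card] at this
  rw [← this]
  exact (Fintype.card_subtype _).symm

theorem iso_finrank_le {n : ℕ} (S : Submodule F2 (PV n)) (hS : IsIsotropic S) :
    Module.finrank F2 S ≤ n := by
  have h1 := card_orth S
  have h2 : #{f : PV n | f ∈ S} ≤ #{f : PV n | ∀ x ∈ S, symp x f = 0} := by
    apply Finset.card_le_card
    intro f hf
    simp only [Finset.mem_filter, Finset.mem_univ, true_and] at hf ⊢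
    exact fun x hx => hS x hx f hf
  rw [card_sub] at h2
  have h3 : 2 ^ (2 * Module.finrank F2 S) ≤ 2 ^ (2 * n) := by
    rw [← h1, two_mul, pow_add]
    exact Nat.mul_le_mul_right _ h2
  have := (Nat.pow_le_pow_iff_right (by norm_num : 1 < 2)).1 h3
  omega

theorem iso_sup {n : ℕ} (S : Submodule F2 (PV n)) (hS : IsIsotropic S) (v : PV n)
    (hv : ∀ x ∈ S, symp x v = 0) : IsIsotropic (S ⊔ Submodule.span F2 {v}) := by
  intro x hx y hy
  obtain ⟨a, ha, b, hb, rfl⟩ := Submodule.mem_sup.1 hx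
  obtain ⟨c, hc, d, hd, rfl⟩ := Submodule.mem_sup.1 hy
  obtain ⟨r, rfl⟩ := Submodule.mem_span_singleton.1 hb
  obtain ⟨s, rfl⟩ := Submodule.mem_span_singleton.1 hd
  simp only [symp_add_left, symp_add_right, symp_smul_left, symp_smul_right, hS a ha c hc, hv a ha,
    symp_comm v c, hv c hc, symp_self]
  simp

theorem finrank_sup_singleton {n : ℕ} (S : Submodule F2 (PV n)) (v : PV n) (hv : v ∉ S) :
    Module.finrank F2 (S ⊔ Submodule.span F2 {v} : Submodule F2 (PV n))
      = Module.finrank F2 S + 1 := by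
  have h := Submodule.finrank_sup_add_finrank_inf_eq S (Submodule.span F2 {v})
  have hv0 : v ≠ 0 := fun h0 => hv (h0 ▸ S.zero_mem)
  have h2 : S ⊓ Submodule.span F2 {v} = ⊥ := by
    rw [← disjoint_iff]
    exact (Submodule.disjoint_span_singleton_of_notMem hv)
  rw [h2, finrank_span_singleton hv0, finrank_bot] at h
  omega

/-- The number of Lagrangians above an isotropic subspace depends only on its dimension. -/
theorem card_above (n : ℕ) (j : ℕ) : ∀ k, k + j = n → ∃ r : ℕ, ∀ S ∈ Lset n k,
    #{X : Submodule F2 (PV n) | X ∈ Lset n n ∧ S ≤ X} = r := by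
  induction j with
  | zero =>
    intro k hk
    refine ⟨1, fun S hS => ?_⟩
    obtain rfl : k = n := by omega
    rw [Finset.card_eq_one]
    refine ⟨S, ?_⟩
    ext X
    simp only [Finset.mem_filter, Finset.mem_univ, true_and, Finset.mem_singleton]
    constructor
    · rintro ⟨hX, hle⟩
      exact (Submodule.eq_of_le_of_finrank_eq hle (by rw [hS.2, hX.2])).symm
    · rintro rfl
      exact ⟨hS, le_rfl⟩
  | succ j ih =>
    intro k hk
    obtain ⟨r, hr⟩ := ih (k + 1) (by omega)
    refine ⟨((2 ^ (2 * n) / 2 ^ k - 2 ^ k) * r) / (2 ^ n - 2 ^ k), fun S hS => ?_⟩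
    have hpos : 0 < 2 ^ n - 2 ^ k := by
      have : 2 ^ k < 2 ^ n := Nat.pow_lt_pow_right (by norm_num) (by omega)
      omega
    symm
    apply Nat.div_eq_of_eq_mul_left hpos
    have hdc := Finset.sum_card_bipartiteAbove_eq_sum_card_bipartiteBelow
      (s := ({X : Submodule F2 (PV n) | X ∈ Lset n n ∧ S ≤ X} : Finset _))
      (t := ({v : PV n | (∀ x ∈ S, symp x v = 0) ∧ v ∉ S} : Finset _))
      (fun X v => v ∈ X)
    have hl : ∀ X ∈ ({X : Submodule F2 (PV n) | X ∈ Lset n n ∧ S ≤ X} : Finset _),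
        #(Finset.bipartiteAbove (fun X v => v ∈ X)
          ({v : PV n | (∀ x ∈ S, symp x v = 0) ∧ v ∉ S} : Finset _) X) = 2 ^ n - 2 ^ k := by
      intro X hX
      simp only [Finset.mem_filter, Finset.mem_univ, true_and] at hX
      have : (Finset.bipartiteAbove (fun (X : Submodule F2 (PV n)) v => v ∈ X)
          ({v : PV n | (∀ x ∈ S, symp x v = 0) ∧ v ∉ S} : Finset _) X)
          = ({v | v ∈ X} : Finset (PV n)) \ ({v | v ∈ S} : Finset (PV n)) := by
        ext v
        simp only [Finset.mem_bipartiteAbove, Finset.mem_filter, Finset.mem_univ, true_and,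
          Finset.mem_sdiff]
        constructor
        · rintro ⟨⟨_, h⟩, h'⟩; exact ⟨h', h⟩
        · rintro ⟨h', h⟩; exact ⟨⟨fun x hx => hX.1.1 x (hX.2 hx) v h', h⟩, h'⟩
      rw [this, Finset.card_sdiff_of_subset, card_sub, card_sub, hX.1.2, hS.2]
      intro v hv
      simp only [Finset.mem_filter, Finset.mem_univ, true_and] at hv ⊢
      exact hX.2 hv
    have hr' : ∀ v ∈ ({v : PV n | (∀ x ∈ S, symp x v = 0) ∧ v ∉ S} : Finset _),
        #(Finset.bipartiteBelow (fun X v => v ∈ X)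
          ({X : Submodule F2 (PV n) | X ∈ Lset n n ∧ S ≤ X} : Finset _) v) = r := by
      intro v hv
      simp only [Finset.mem_filter, Finset.mem_univ, true_and] at hv
      rw [← hr (S ⊔ Submodule.span F2 {v}) ⟨iso_sup S hS.1 v hv.1, by
        rw [finrank_sup_singleton S v hv.2, hS.2]⟩]
      congr 1
      ext X
      simp only [Finset.mem_bipartiteBelow, Finset.mem_filter, Finset.mem_univ, true_and,
        sup_le_iff, Submodule.span_singleton_le_iff_mem]
      tauto
    rw [Finset.sum_congr rfl hl, Finset.sum_congr rfl hr', Finset.sum_const, Finset.sum_const,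
      smul_eq_mul, smul_eq_mul] at hdc
    rw [hdc]
    congr 1
    have : ({v : PV n | (∀ x ∈ S, symp x v = 0) ∧ v ∉ S} : Finset _)
        = ({v | ∀ x ∈ S, symp x v = 0} : Finset (PV n)) \ ({v | v ∈ S} : Finset (PV n)) := by
      ext v
      simp
    rw [this, Finset.card_sdiff_of_subset, card_sub, hS.2]
    · congr 1
      have := card_orth S
      rw [hS.2] at this
      exact Nat.div_eq_of_eq_mul_left (by positivity) this.symm
    · intro v hv
      simp only [Finset.mem_filter, Finset.mem_univ, true_and] at hv ⊢
      exact fun x hx => hS.1 x hx v hv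

/-! #### planes -/

theorem f2_cases (r : F2) : r = 0 ∨ r = 1 := by
  revert r; decide

theorem pv_add_self {n : ℕ} (x : PV n) : x + x = 0 := by
  ext i <;> simp [CharTwo.add_self_eq_zero]

theorem li_pair {n : ℕ} {x y : PV n} (hx : x ≠ 0) (hy : y ≠ 0) (hxy : x ≠ y) :
    LinearIndependent F2 ![x, y] := by
  rw [LinearIndependent.pair_iff]
  intro s t h
  rcases f2_cases s with rfl | rfl <;> rcases f2_cases t with rfl | rfl
  · simp
  · simp at h; exact absurd h hy
  · simp at h; exact absurd h hx
  · exfalso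
    simp only [one_smul] at h
    apply hxy
    have := congrArg (· + y) h
    simpa [add_assoc, pv_add_self] using this

theorem finrank_pair {n : ℕ} {x y : PV n} (hx : x ≠ 0) (hy : y ≠ 0) (hxy : x ≠ y) :
    Module.finrank F2 (Submodule.span F2 {x, y}) = 2 := by
  have := finrank_span_eq_card (li_pair hx hy hxy)
  rwa [Matrix.range_cons_cons_empty, Fintype.card_fin] at this

/-- nonzero distinct pairs -/
noncomputable def prs (n : ℕ) : Finset (PV n × PV n) :=
  {p | p.1 ≠ 0 ∧ p.2 ≠ 0 ∧ p.1 ≠ p.2}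

/-- nonzero distinct pairs inside a subspace -/
noncomputable def prsIn {n : ℕ} (X : Submodule F2 (PV n)) : Finset (PV n × PV n) :=
  {p ∈ prs n | p.1 ∈ X ∧ p.2 ∈ X}

theorem card_prsIn {n : ℕ} (X : Submodule F2 (PV n)) :
    #(prsIn X) = (2 ^ (Module.finrank F2 X) - 1) * (2 ^ (Module.finrank F2 X) - 1)
      - (2 ^ (Module.finrank F2 X) - 1) := by
  have h : prsIn X = (({f : PV n | f ∈ X} : Finset (PV n)).erase 0).offDiag := by
    ext p
    simp only [prsIn, prs, Finset.mem_filter, Finset.mem_univ, true_and, Finset.mem_offDiag,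
      Finset.mem_erase]
    tauto
  rw [h, Finset.offDiag_card, Finset.card_erase_of_mem (by simp), card_sub]

theorem prs_sum {n : ℕ} (g : Submodule F2 (PV n) → ℕ) :
    ∑ p ∈ prs n, g (Submodule.span F2 {p.1, p.2})
      = 6 * ∑ t ∈ ({t : Submodule F2 (PV n) | Module.finrank F2 t = 2} : Finset _), g t := by
  rw [← Finset.sum_fiberwise_of_maps_to (s := prs n)
    (t := ({t : Submodule F2 (PV n) | Module.finrank F2 t = 2} : Finset _))
    (g := fun p => Submodule.span F2 {p.1, p.2}), Finset.mul_sum]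
  · refine Finset.sum_congr rfl fun t ht => ?_
    simp only [Finset.mem_filter, Finset.mem_univ, true_and] at ht
    have : ({p ∈ prs n | Submodule.span F2 {p.1, p.2} = t} : Finset _) = prsIn t := by
      ext p
      simp only [prsIn, Finset.mem_filter]
      refine and_congr_right fun hp => ?_
      simp only [prs, Finset.mem_filter, Finset.mem_univ, true_and] at hp
      constructor
      · rintro rfl
        exact ⟨Submodule.subset_span (by simp), Submodule.subset_span (by simp)⟩
      · rintro ⟨h1, h2⟩
        apply Submodule.eq_of_le_of_finrank_eq
        · rw [Submodule.span_le]
          rintro z (rfl | rfl)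
          · exact h1
          · exact h2
        · rw [finrank_pair hp.1 hp.2.1 hp.2.2, ht]
    rw [this]
    have h6 : #(prsIn t) = 6 := by rw [card_prsIn, ht]; norm_num
    rw [← h6, ← smul_eq_mul, ← Finset.sum_const]
    refine Finset.sum_congr rfl fun p hp => ?_
    rw [← this, Finset.mem_filter] at hp
    rw [hp.2]
  · intro p hp
    simp only [prs, Finset.mem_filter, Finset.mem_univ, true_and] at hp ⊢
    exact finrank_pair hp.1 hp.2.1 hp.2.2

theorem card_planes {n : ℕ} (X : Submodule F2 (PV n)) :
    6 * #{t : Submodule F2 (PV n) | Module.finrank F2 t = 2 ∧ t ≤ X} = #(prsIn X) := by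
  have := prs_sum (fun t => if t ≤ X then 1 else 0)
  rw [← Finset.sum_filter, ← Finset.sum_filter, Finset.filter_filter] at this
  simp only [Finset.sum_const, smul_eq_mul, mul_one] at this
  rw [← this, prsIn]
  congr 1
  ext p
  simp only [Finset.mem_filter, Submodule.span_le, Set.insert_subset_iff, Set.singleton_subset_iff,
    SetLike.mem_coe]

/-- Connectivity of Lagrangians sharing planes. -/
theorem lag_conn {n : ℕ} (hn : 3 ≤ n) (ψ : Submodule F2 (PV n) → ℝ)
    (hψ : ∀ X ∈ Lset n n, ∀ Y ∈ Lset n n, ∀ t ∈ Lset n 2, t ≤ X → t ≤ Y → ψ X = ψ Y) :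
    ∀ m, ∀ X ∈ Lset n n, ∀ Y ∈ Lset n n,
      n ≤ Module.finrank F2 (X ⊓ Y : Submodule F2 (PV n)) + m → ψ X = ψ Y := by
  intro m
  induction m with
  | zero =>
    intro X hX Y hY h
    have h1 : X ⊓ Y = X := Submodule.eq_of_le_of_finrank_le inf_le_left (by rw [hX.2]; omega)
    have h2 : X ⊓ Y = Y := Submodule.eq_of_le_of_finrank_le inf_le_right (by rw [hY.2]; omega)
    rw [← h1, h2]
  | succ m ih =>
    intro X hX Y hY h
    by_cases hXY : Y ≤ X
    · rw [Submodule.eq_of_le_of_finrank_eq hXY (by rw [hX.2, hY.2])]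
    obtain ⟨v, hvY, hvX⟩ := SetLike.not_le_iff_exists.1 hXY
    set K := X ⊓ LinearMap.ker (sympL v) with hK
    have hKX : K ≤ X := inf_le_left
    have hKv : ∀ x ∈ K, symp x v = 0 := fun x hx => by
      rw [symp_comm]; exact hx.2
    have hKdim : n ≤ Module.finrank F2 K + 1 := by
      have h1 := LinearMap.finrank_range_add_finrank_ker ((sympL v).comp X.subtype)
      have h2 : Module.finrank F2 (LinearMap.range ((sympL v).comp X.subtype)) ≤ 1 := by
        have := Submodule.finrank_le (LinearMap.range ((sympL v).comp X.subtype))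
        simpa using this
      have h3 : Module.finrank F2 (LinearMap.ker ((sympL v).comp X.subtype))
          = Module.finrank F2 K := by
        have : K = (LinearMap.ker ((sympL v).comp X.subtype)).map X.subtype := by
          rw [LinearMap.ker_comp, Submodule.map_comap_subtype]
        rw [this]
        exact (LinearEquiv.finrank_eq (Submodule.equivMapOfInjective X.subtype
          X.injective_subtype _))
      rw [hX.2] at h1
      omega
    have hKiso : IsIsotropic K := fun x hx y hy => hX.1 x (hKX hx) y (hKX hy)
    set X' := K ⊔ Submodule.span F2 {v} with hX'
    have hiso' : IsIsotropic X' := iso_sup K hKiso v hKv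
    have hdim' := finrank_sup_singleton K v (fun h => hvX (hKX h))
    rw [← hX'] at hdim'
    have hX'L : X' ∈ Lset n n := by
      refine ⟨hiso', ?_⟩
      have := iso_finrank_le X' hiso'
      omega
    have hvX' : v ∈ X' := Submodule.mem_sup_right (Submodule.mem_span_singleton_self v)
    have hplane : ∃ t ∈ Lset n 2, t ≤ K := by
      have hc := card_planes K
      have : 0 < #(prsIn K) := by
        rw [card_prsIn]
        have h4 : 2 ^ 2 ≤ 2 ^ (Module.finrank F2 K) := Nat.pow_le_pow_right (by norm_num) (by omega)
        rw [← Nat.mul_sub_one]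
        apply Nat.mul_pos <;> omega
      rw [← hc] at this
      obtain ⟨t, ht⟩ := Finset.card_pos.1 (Nat.pos_of_mul_pos_left this)
      simp only [Finset.mem_filter, Finset.mem_univ, true_and] at ht
      exact ⟨t, ⟨fun x hx y hy => hKiso x (ht.2 hx) y (ht.2 hy), ht.1⟩, ht.2⟩
    obtain ⟨t, ht, htK⟩ := hplane
    rw [hψ X hX X' hX'L t ht (htK.trans hKX) (htK.trans le_sup_left)]
    apply ih X' hX'L Y hY
    have hlt : X ⊓ Y < X' ⊓ Y := by
      refine lt_of_le_of_ne ?_ ?_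
      · rintro x ⟨hx, hy⟩
        exact ⟨Submodule.mem_sup_left ⟨hx, hY.1 v hvY x hy⟩, hy⟩
      · intro heq
        have : v ∈ X ⊓ Y := heq ▸ ⟨hvX', hvY⟩
        exact hvX this.1
    have := Submodule.finrank_lt_finrank_of_lt hlt
    omega

/-! ### Part C: contextuality -/

theorem dotZ_cast {n : ℕ} (a b : Fin n → F2) :
    ((dotZ (liftZ a) (liftZ b) : ℤ) : F2) = ∑ i, a i * b i := by
  simp [dotZ, liftZ]

theorem neg_one_zpow_of_cast_zero (z : ℤ) (h : (z : F2) = 0) : (-1 : ℂ) ^ z = 1 := by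
  have : Even z := by
    rw [even_iff_two_dvd]
    exact (ZMod.intCast_zmod_eq_zero_iff_dvd z 2).1 h
  exact this.neg_one_zpow

theorem neg_one_zpow_of_cast_one (z : ℤ) (h : (z : F2) = 1) : (-1 : ℂ) ^ z = -1 := by
  have h2 : ((z - 1 : ℤ) : F2) = 0 := by push_cast; rw [h]; simp
  have h3 := neg_one_zpow_of_cast_zero _ h2
  have : z = (z - 1) + 1 := by ring
  rw [this, zpow_add₀ (by norm_num), h3]; simp

theorem phase_eq {n : ℕ} (x y : PV n) : phase x y =
    Complex.I ^ (dotZ (liftZ x.1) (liftZ x.2) + dotZ (liftZ y.1) (liftZ y.2)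
      - dotZ (liftZ (x + y).1) (liftZ (x + y).2)) *
    (-1 : ℂ) ^ (dotZ (liftZ x.2) (liftZ y.1)) := by
  rw [phase, sub_eq_add_neg, zpow_add₀ Complex.I_ne_zero, zpow_add₀ Complex.I_ne_zero]

theorem phase_pm {n : ℕ} (x y : PV n) (h : symp x y = 0) : phase x y = 1 ∨ phase x y = -1 := by
  rw [← sq_eq_sq_iff_eq_or_eq_neg, one_pow]
  have hev : ((dotZ (liftZ x.1) (liftZ x.2) + dotZ (liftZ y.1) (liftZ y.2)
      - dotZ (liftZ (x + y).1) (liftZ (x + y).2) : ℤ) : F2) = 0 := by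
    rw [← h]
    push_cast
    simp only [dotZ_cast, symp, Prod.fst_add, Prod.snd_add, Pi.add_apply, add_mul, mul_add,
      Finset.sum_add_distrib]
    have e1 : ∑ i, x.2 i * y.1 i = ∑ i, y.1 i * x.2 i :=
      Finset.sum_congr rfl fun i _ => mul_comm _ _
    rw [e1, CharTwo.sub_eq_add]
    have k : ∀ z : F2, 2 * z = 0 := by decide
    linear_combination k (∑ i, x.1 i * x.2 i) + k (∑ i, y.1 i * y.2 i)
  have hz : ∀ (z : ℂ) (e : ℤ), (z ^ e) ^ 2 = (z ^ 2) ^ e := by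
    intro z e
    rw [← zpow_natCast, ← zpow_natCast, ← zpow_mul, ← zpow_mul, mul_comm]
  rw [phase_eq, mul_pow, hz, hz, Complex.I_sq]
  rw [neg_one_zpow_of_cast_zero _ hev]
  simp

theorem wght_grid {n : ℕ} (a b c d : PV n) (h1 : symp a b = 0) (h2 : symp c d = 0)
    (h3 : symp (a + b) (c + d) = 0) (h4 : symp a c = 0) (h5 : symp b d = 0)
    (h6 : symp (a + c) (b + d) = 0) (h7 : symp b c = 1) :
    wght a b + wght c d + wght (a + b) (c + d) + wght a c + wght b d + wght (a + c) (b + d)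
      = 1 := by
  have hprod : phase a b * phase c d * phase (a + b) (c + d)
      = - (phase a c * phase b d * phase (a + c) (b + d)) := by
    have hs : (a + c) + (b + d) = (a + b) + (c + d) := by abel
    simp only [phase_eq, hs]
    set g : PV n → ℤ := fun x => dotZ (liftZ x.1) (liftZ x.2)
    set r : ℤ := dotZ (liftZ a.2) (liftZ b.1) + dotZ (liftZ c.2) (liftZ d.1)
      + dotZ (liftZ (a + b).2) (liftZ (c + d).1) with hr
    set q : ℤ := dotZ (liftZ a.2) (liftZ c.1) + dotZ (liftZ b.2) (liftZ d.1)
      + dotZ (liftZ (a + c).2) (liftZ (b + d).1) with hq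
    have hrq : ((r - q : ℤ) : F2) = 1 := by
      rw [← h7, hr, hq]
      push_cast
      simp only [dotZ_cast, symp, Prod.fst_add, Prod.snd_add, Pi.add_apply, add_mul, mul_add,
        Finset.sum_add_distrib]
      have e1 : ∑ i, b.1 i * c.2 i = ∑ i, c.2 i * b.1 i :=
        Finset.sum_congr rfl fun i _ => mul_comm _ _
      rw [e1, CharTwo.sub_eq_add]
      generalize (∑ i, c.2 i * b.1 i) = z1
      generalize (∑ i, b.2 i * c.1 i) = z2
      generalize (∑ i, a.2 i * b.1 i) = z3
      generalize (∑ i, c.2 i * d.1 i) = z4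
      generalize (∑ i, a.2 i * c.1 i) = z5
      generalize (∑ i, a.2 i * d.1 i) = z6
      generalize (∑ i, b.2 i * d.1 i) = z7
      clear * -
      revert z1 z2 z3 z4 z5 z6 z7
      decide
    have hneg : (-1 : ℂ) ^ r = - (-1 : ℂ) ^ q := by
      have : r = (r - q) + q := by ring
      rw [this, zpow_add₀ (by norm_num), neg_one_zpow_of_cast_one _ hrq]; simp
    have hL : ∀ (x1 x2 x3 : ℤ) (y1 y2 y3 : ℤ),
        Complex.I ^ x1 * (-1 : ℂ) ^ y1 * (Complex.I ^ x2 * (-1 : ℂ) ^ y2)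
          * (Complex.I ^ x3 * (-1 : ℂ) ^ y3)
        = Complex.I ^ (x1 + x2 + x3) * (-1 : ℂ) ^ (y1 + y2 + y3) := by
      intro x1 x2 x3 y1 y2 y3
      simp only [zpow_add₀ Complex.I_ne_zero, zpow_add₀ (show (-1 : ℂ) ≠ 0 by norm_num)]
      ring
    rw [hL, hL, ← hr, ← hq, hneg, mul_neg]
    congr 3
    ring
  unfold wght
  rcases phase_pm _ _ h1 with e1 | e1 <;> rcases phase_pm _ _ h2 with e2 | e2 <;>
  rcases phase_pm _ _ h3 with e3 | e3 <;> rcases phase_pm _ _ h4 with e4 | e4 <;>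
  rcases phase_pm _ _ h5 with e5 | e5 <;> rcases phase_pm _ _ h6 with e6 | e6 <;>
  rw [e1, e2, e3, e4, e5, e6] at hprod ⊢ <;>
  first
  | (exfalso; norm_num at hprod; done)
  | (norm_num; done)
  | (norm_num; decide)

/-- `F` satisfies the outcome condition on the subspace `t`. -/
def GoodOn {n : ℕ} (F : PV n → F2) (t : Submodule F2 (PV n)) : Prop :=
  ∀ x ∈ t, ∀ y ∈ t, F (x + y) = F x + F y + wght x y

theorem grid_bad {n : ℕ} (F : PV n → F2) (a b c d : PV n) (h1 : symp a b = 0) (h2 : symp c d = 0)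
    (h3 : symp (a + b) (c + d) = 0) (h4 : symp a c = 0) (h5 : symp b d = 0)
    (h6 : symp (a + c) (b + d) = 0) (h7 : symp b c = 1)
    (g1 : F (a + b) = F a + F b + wght a b) (g2 : F (c + d) = F c + F d + wght c d)
    (g3 : F ((a + b) + (c + d)) = F (a + b) + F (c + d) + wght (a + b) (c + d))
    (g4 : F (a + c) = F a + F c + wght a c) (g5 : F (b + d) = F b + F d + wght b d)
    (g6 : F ((a + c) + (b + d)) = F (a + c) + F (b + d) + wght (a + c) (b + d)) : False := by
  have hs : (a + c) + (b + d) = (a + b) + (c + d) := by abel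
  have hw := wght_grid a b c d h1 h2 h3 h4 h5 h6 h7
  rw [hs] at g6
  rw [g3, g1, g2, g4, g5] at g6
  generalize wght a b = w1 at *
  generalize wght c d = w2 at *
  generalize wght (a + b) (c + d) = w3 at *
  generalize wght a c = w4 at *
  generalize wght b d = w5 at *
  generalize wght (a + c) (b + d) = w6 at *
  generalize F a = f1 at *
  generalize F b = f2 at *
  generalize F c = f3 at *
  generalize F d = f4 at *
  have e : w1 + w2 + w3 + w4 + w5 + w6 = 0 := by
    have := congrArg (· + (f1 + f2 + w1 + (f3 + f4 + w2) + w3)) g6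
    simp only [CharTwo.add_self_eq_zero] at this
    rw [this]
    have k : ∀ z : F2, 2 * z = 0 := by decide
    linear_combination (-1 : F2) * k f1 - k f2 - k f3 - k f4
  rw [e] at hw
  exact absurd hw (by decide)

/-- Gram matrix of a symplectic quadruple. -/
def dOm : Fin 4 → Fin 4 → F2 := ![![0, 0, 1, 0], ![0, 0, 0, 1], ![1, 0, 0, 0], ![0, 1, 0, 0]]

/-- Symplectic matrices whose first two rows span the fifteen isotropic planes of `F2^4`. -/
def dMat : Fin 15 → Fin 4 → Fin 4 → F2 := ![
  ![![0, 0, 0, 1], ![0, 0, 1, 0], ![0, 1, 0, 0], ![1, 0, 0, 0]],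
  ![![0, 0, 0, 1], ![1, 0, 0, 0], ![0, 1, 0, 0], ![0, 0, 1, 0]],
  ![![0, 0, 0, 1], ![1, 0, 1, 0], ![0, 1, 0, 0], ![0, 0, 1, 0]],
  ![![0, 0, 1, 0], ![0, 1, 0, 0], ![1, 0, 0, 0], ![0, 0, 0, 1]],
  ![![0, 0, 1, 0], ![0, 1, 0, 1], ![1, 0, 0, 0], ![0, 0, 0, 1]],
  ![![0, 0, 1, 1], ![1, 1, 0, 0], ![0, 1, 0, 0], ![0, 0, 1, 0]],
  ![![0, 0, 1, 1], ![1, 1, 0, 1], ![0, 1, 0, 1], ![0, 0, 1, 0]],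
  ![![0, 1, 0, 0], ![1, 0, 0, 0], ![0, 0, 0, 1], ![0, 0, 1, 0]],
  ![![0, 1, 0, 0], ![1, 0, 1, 0], ![0, 0, 0, 1], ![0, 0, 1, 0]],
  ![![0, 1, 0, 1], ![1, 0, 0, 0], ![0, 0, 0, 1], ![0, 0, 1, 0]],
  ![![0, 1, 0, 1], ![1, 0, 1, 0], ![0, 0, 0, 1], ![0, 0, 1, 0]],
  ![![0, 1, 1, 0], ![1, 0, 0, 1], ![0, 0, 0, 1], ![0, 0, 1, 0]],
  ![![0, 1, 1, 0], ![1, 0, 1, 1], ![0, 0, 0, 1], ![0, 0, 1, 0]],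
  ![![0, 1, 1, 1], ![1, 0, 0, 1], ![0, 0, 0, 1], ![0, 0, 1, 0]],
  ![![0, 1, 1, 1], ![1, 0, 1, 1], ![0, 0, 0, 1], ![0, 0, 1, 0]]]

/-- Ten Mermin grids. -/
def dGrid : Fin 10 → Fin 4 → Fin 4 → F2 := ![
  ![![0, 0, 0, 1], ![0, 0, 1, 0], ![1, 0, 0, 0], ![0, 1, 0, 0]],
  ![![0, 0, 0, 1], ![0, 0, 1, 0], ![1, 0, 0, 0], ![0, 1, 0, 1]],
  ![![0, 0, 0, 1], ![0, 0, 1, 0], ![1, 0, 1, 0], ![0, 1, 0, 0]],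
  ![![0, 0, 0, 1], ![0, 0, 1, 0], ![1, 0, 1, 0], ![0, 1, 0, 1]],
  ![![0, 0, 0, 1], ![1, 0, 0, 0], ![1, 0, 1, 0], ![0, 1, 0, 0]],
  ![![0, 0, 0, 1], ![1, 0, 0, 0], ![1, 0, 1, 0], ![0, 1, 0, 1]],
  ![![0, 0, 1, 0], ![0, 1, 0, 0], ![0, 1, 0, 1], ![1, 0, 0, 0]],
  ![![0, 0, 1, 0], ![0, 1, 0, 0], ![0, 1, 0, 1], ![1, 0, 1, 0]],
  ![![0, 0, 1, 1], ![1, 1, 0, 0], ![1, 1, 0, 1], ![1, 0, 0, 0]],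
  ![![0, 0, 1, 1], ![1, 1, 0, 0], ![1, 1, 0, 1], ![1, 0, 1, 1]]]

/-- The six planes of each grid. -/
def dIdx : Fin 10 → Fin 6 → Fin 15 := ![
  ![0, 7, 5, 1, 3, 11],
  ![0, 9, 6, 1, 4, 13],
  ![0, 8, 6, 2, 3, 12],
  ![0, 10, 5, 2, 4, 14],
  ![1, 8, 13, 2, 7, 14],
  ![1, 10, 11, 2, 9, 12],
  ![3, 9, 12, 4, 7, 14],
  ![3, 10, 11, 4, 8, 13],
  ![5, 9, 10, 6, 7, 8],
  ![5, 12, 11, 6, 14, 13]]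

/-- The form on coefficient vectors. -/
def cOm (c d : Fin 4 → F2) : F2 := ∑ i, ∑ k, c i * d k * dOm i k

/-- The inverse of a symplectic matrix. -/
def dInv (M : Fin 4 → Fin 4 → F2) : Fin 4 → Fin 4 → F2 :=
  fun i j => ∑ k, ∑ l, dOm i k * M l k * dOm l j

/-- The vector with given coefficients. -/
def vec {n : ℕ} (Q : Fin 4 → PV n) (c : Fin 4 → F2) : PV n := ∑ i, c i • Q i

/-- Action of a matrix on quadruples. -/
def act {n : ℕ} (M : Fin 4 → Fin 4 → F2) (Q : Fin 4 → PV n) : Fin 4 → PV n :=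
  fun i => vec Q (M i)

/-- Symplectic quadruples. -/
noncomputable def quads (n : ℕ) : Finset (Fin 4 → PV n) :=
  {Q | ∀ i k, symp (Q i) (Q k) = dOm i k}

theorem vec_add {n : ℕ} (Q : Fin 4 → PV n) (c d : Fin 4 → F2) :
    vec Q (c + d) = vec Q c + vec Q d := by
  simp [vec, add_smul, Finset.sum_add_distrib]

theorem symp_vec {n : ℕ} {Q : Fin 4 → PV n} (hQ : Q ∈ quads n) (c d : Fin 4 → F2) :
    symp (vec Q c) (vec Q d) = cOm c d := by
  simp only [quads, Finset.mem_filter, Finset.mem_univ, true_and] at hQ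
  unfold vec cOm
  rw [symp_sum_left]
  refine Finset.sum_congr rfl fun i _ => ?_
  rw [symp_comm, symp_sum_left]
  refine Finset.sum_congr rfl fun k _ => ?_
  rw [symp_smul_left, symp_smul_right, symp_comm, hQ]
  ring

theorem act_mem {n : ℕ} {Q : Fin 4 → PV n} (hQ : Q ∈ quads n) (M : Fin 4 → Fin 4 → F2)
    (hM : ∀ i k, cOm (M i) (M k) = dOm i k) : act M Q ∈ quads n := by
  simp only [quads, Finset.mem_filter, Finset.mem_univ, true_and]
  intro i k
  rw [act, act, symp_vec hQ, hM]

theorem act_act {n : ℕ} (Q : Fin 4 → PV n) (M N : Fin 4 → Fin 4 → F2)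
    (h : ∀ i j, ∑ k, M i k * N k j = if i = j then 1 else 0) : act M (act N Q) = Q := by
  funext i
  simp only [act, vec, Finset.smul_sum, smul_smul]
  rw [Finset.sum_comm]
  simp only [← Finset.sum_smul, h]
  simp

theorem dMat_symp : ∀ j i k, cOm (dMat j i) (dMat j k) = dOm i k := by decide +kernel
theorem dInv_symp : ∀ j i k, cOm (dInv (dMat j) i) (dInv (dMat j) k) = dOm i k := by decide +kernel
theorem dInv_left : ∀ l i j, ∑ k, dInv (dMat l) i k * dMat l k j = if i = j then 1 else 0 := by
  decide +kernel
theorem dInv_right : ∀ l i j, ∑ k, dMat l i k * dInv (dMat l) k j = if i = j then 1 else 0 := by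
  decide +kernel

theorem act_sum {n : ℕ} (j : Fin 15) (g : (Fin 4 → PV n) → ℕ) :
    ∑ Q ∈ quads n, g (act (dMat j) Q) = ∑ Q ∈ quads n, g Q := by
  refine Finset.sum_nbij' (fun Q => act (dMat j) Q) (fun Q => act (dInv (dMat j)) Q)
    (fun Q hQ => act_mem hQ _ (dMat_symp j)) (fun Q hQ => act_mem hQ _ (dInv_symp j))
    (fun Q _ => act_act Q _ _ (dInv_left j)) (fun Q _ => act_act Q _ _ (dInv_right j))
    (fun Q _ => rfl)

/-- coefficient vector `c` lies on line `j` -/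
def onLine (j : Fin 15) (c : Fin 4 → F2) : Prop :=
  c = dMat j 0 ∨ c = dMat j 1 ∨ c = dMat j 0 + dMat j 1

instance (j : Fin 15) (c : Fin 4 → F2) : Decidable (onLine j c) := by
  unfold onLine; infer_instance

theorem mem_line {n : ℕ} (Q : Fin 4 → PV n) (j : Fin 15) (c : Fin 4 → F2) (h : onLine j c) :
    vec Q c ∈ Submodule.span F2 {act (dMat j) Q 0, act (dMat j) Q 1} := by
  have h0 : act (dMat j) Q 0 ∈ Submodule.span F2 {act (dMat j) Q 0, act (dMat j) Q 1} :=
    Submodule.subset_span (by simp)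
  have h1 : act (dMat j) Q 1 ∈ Submodule.span F2 {act (dMat j) Q 0, act (dMat j) Q 1} :=
    Submodule.subset_span (by simp)
  rcases h with rfl | rfl | rfl
  · exact h0
  · exact h1
  · rw [vec_add]; exact Submodule.add_mem _ h0 h1

theorem dGrid_ok : ∀ g : Fin 10,
    (cOm (dGrid g 0) (dGrid g 1) = 0 ∧ cOm (dGrid g 2) (dGrid g 3) = 0 ∧
    cOm (dGrid g 0 + dGrid g 1) (dGrid g 2 + dGrid g 3) = 0 ∧
    cOm (dGrid g 0) (dGrid g 2) = 0 ∧ cOm (dGrid g 1) (dGrid g 3) = 0 ∧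
    cOm (dGrid g 0 + dGrid g 2) (dGrid g 1 + dGrid g 3) = 0 ∧
    cOm (dGrid g 1) (dGrid g 2) = 1) ∧
    (onLine (dIdx g 0) (dGrid g 0) ∧ onLine (dIdx g 0) (dGrid g 1)) ∧
    (onLine (dIdx g 1) (dGrid g 2) ∧ onLine (dIdx g 1) (dGrid g 3)) ∧
    (onLine (dIdx g 2) (dGrid g 0 + dGrid g 1) ∧ onLine (dIdx g 2) (dGrid g 2 + dGrid g 3)) ∧
    (onLine (dIdx g 3) (dGrid g 0) ∧ onLine (dIdx g 3) (dGrid g 2)) ∧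
    (onLine (dIdx g 4) (dGrid g 1) ∧ onLine (dIdx g 4) (dGrid g 3)) ∧
    (onLine (dIdx g 5) (dGrid g 0 + dGrid g 2) ∧ onLine (dIdx g 5) (dGrid g 1 + dGrid g 3)) := by
  decide +kernel

/-- indicator of failure of the outcome condition -/
noncomputable def badI {n : ℕ} (F : PV n → F2) (t : Submodule F2 (PV n)) : ℕ :=
  if GoodOn F t then 0 else 1

theorem grid_one {n : ℕ} (F : PV n → F2) {Q : Fin 4 → PV n} (hQ : Q ∈ quads n) (b : Fin 15 → ℕ)
    (hb : ∀ j, b j = badI F (Submodule.span F2 {act (dMat j) Q 0, act (dMat j) Q 1}))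
    (g : Fin 10) :
    1 ≤ b (dIdx g 0) + b (dIdx g 1) + b (dIdx g 2) + b (dIdx g 3) + b (dIdx g 4)
      + b (dIdx g 5) := by
  by_contra hlt
  have hgood : ∀ j, b j = 0 → ∀ c d, onLine j c → onLine j d →
      F (vec Q c + vec Q d) = F (vec Q c) + F (vec Q d) + wght (vec Q c) (vec Q d) := by
    intro j hj c d hc hd
    rw [hb, badI] at hj
    have : GoodOn F (Submodule.span F2 {act (dMat j) Q 0, act (dMat j) Q 1}) := by
      by_contra hne
      rw [if_neg hne] at hj
      exact one_ne_zero hj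
    exact this _ (mem_line Q j c hc) _ (mem_line Q j d hd)
  obtain ⟨⟨s1, s2, s3, s4, s5, s6, s7⟩, l0, l1, l2, l3, l4, l5⟩ := dGrid_ok g
  have g0 := hgood _ (by omega) _ _ l0.1 l0.2
  have g1 := hgood _ (by omega) _ _ l1.1 l1.2
  have g2 := hgood _ (by omega) _ _ l2.1 l2.2
  have g3 := hgood _ (by omega) _ _ l3.1 l3.2
  have g4 := hgood _ (by omega) _ _ l4.1 l4.2
  have g5 := hgood _ (by omega) _ _ l5.1 l5.2
  rw [← symp_vec hQ] at s1 s2 s3 s4 s5 s6 s7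
  simp only [vec_add] at s1 s2 s3 s4 s5 s6 s7 g0 g1 g2 g3 g4 g5
  exact grid_bad F _ _ _ _ s1 s2 s3 s4 s5 s6 s7 g0 g1 g2 g3 g4 g5

theorem doily {n : ℕ} (F : PV n → F2) {Q : Fin 4 → PV n} (hQ : Q ∈ quads n) :
    3 ≤ ∑ j, badI F (Submodule.span F2 {act (dMat j) Q 0, act (dMat j) Q 1}) := by
  set b : Fin 15 → ℕ := fun j =>
    badI F (Submodule.span F2 {act (dMat j) Q 0, act (dMat j) Q 1}) with hb
  have h := grid_one F hQ b (fun j => rfl)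
  have hall : ∑ g : Fin 10, (b (dIdx g 0) + b (dIdx g 1) + b (dIdx g 2) + b (dIdx g 3)
      + b (dIdx g 4) + b (dIdx g 5)) = 4 * ∑ j, b j := by
    clear_value b
    clear h hb
    simp only [Fin.sum_univ_succ, Fin.sum_univ_zero, dIdx]
    simp [Fin.succ, Matrix.cons_val]
    ring
  have h10 : 10 ≤ 4 * ∑ j, b j := by
    rw [← hall]
    calc 10 = ∑ g : Fin 10, 1 := by simp
      _ ≤ _ := Finset.sum_le_sum fun g _ => h g
  change 3 ≤ ∑ j, b j
  omega

theorem quads_fiber {n : ℕ} {x y : PV n} (hx : x ≠ 0) (hy : y ≠ 0) (hxy : x ≠ y)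
    (hs : symp x y = 0) :
    #{Q ∈ quads n | Q 0 = x ∧ Q 1 = y} = (2 ^ (2 * n) / 2 ^ 2) * (2 ^ (2 * n) / 2 ^ 3) := by
  have hk : ∀ (k m N : ℕ), m * 2 ^ k = N → m = N / 2 ^ k := fun k m N h =>
    (Nat.div_eq_of_eq_mul_left (by positivity) h.symm).symm
  have c1 := hk _ _ _ (card_fiber ![x, y] (li_pair hx hy hxy) ![1, 0])
  set S1 : Finset (PV n) := {f | ∀ i, symp (![x, y] i) f = (![1, 0] : Fin 2 → F2) i} with hS1
  have m1 : ∀ f, f ∈ S1 ↔ symp x f = 1 ∧ symp y f = 0 := by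
    intro f
    simp [hS1, Fin.forall_fin_two]
  rw [Finset.card_eq_sum_card_fiberwise (t := S1) (f := fun Q => Q 2)]
  · rw [← c1, ← smul_eq_mul, ← Finset.sum_const]
    refine Finset.sum_congr rfl fun f hf => ?_
    rw [m1] at hf
    have hli : LinearIndependent F2 ![x, y, f] := by
      rw [Fintype.linearIndependent_iff]
      intro g hg
      simp only [Fin.sum_univ_three, Matrix.cons_val_zero, Matrix.cons_val_one,
        Matrix.cons_val] at hg
      have a0 : g 0 = 0 := by
        have := congrArg (fun z => symp z f) hg
        simpa [symp_add_left, symp_smul_left, hf.1, hf.2, symp_self, symp_zero_left] using this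
      have a2 : g 2 = 0 := by
        have := congrArg (fun z => symp z x) hg
        simpa [symp_add_left, symp_smul_left, symp_comm f x, hf.1, symp_comm y x, hs, symp_self,
          symp_zero_left] using this
      have a1 : g 1 = 0 := by
        rw [a0, a2] at hg
        simpa [hy] using hg
      intro i
      fin_cases i
      · exact a0
      · exact a1
      · exact a2
    rw [← hk _ _ _ (card_fiber ![x, y, f] hli ![0, 1, 0])]
    refine Finset.card_nbij' (fun Q => Q 3) (fun f2 => ![x, y, f, f2]) ?_ ?_ ?_ ?_
    · intro Q hQ
      simp only [Finset.coe_filter, Set.mem_ofPred_eq, quads, Finset.mem_filter, Finset.mem_univ,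
        true_and] at hQ ⊢
      obtain ⟨⟨hq, h0, h1⟩, h2⟩ := hQ
      have e0 := hq 0 3
      have e1 := hq 1 3
      have e2 := hq 2 3
      rw [h0] at e0
      rw [h1] at e1
      rw [h2] at e2
      intro i
      fin_cases i
      · exact e0
      · exact e1
      · exact e2
    · intro f2 hf2
      simp only [Finset.coe_filter, Set.mem_ofPred_eq, quads, Finset.mem_filter, Finset.mem_univ,
        true_and] at hf2 ⊢
      have e0 : symp x f2 = 0 := hf2 0
      have e1 : symp y f2 = 1 := hf2 1
      have e2 : symp f f2 = 0 := hf2 2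
      refine ⟨⟨?_, by simp, by simp⟩, by simp⟩
      intro i k
      fin_cases i <;> fin_cases k <;>
        simp [dOm, symp_self, e0, e1, e2, hs, hf.1, hf.2, symp_comm y x, symp_comm f x,
          symp_comm f y, symp_comm f2 x, symp_comm f2 y, symp_comm f2 f]
    · intro Q hQ
      simp only [Finset.coe_filter, Set.mem_ofPred_eq, Finset.mem_filter] at hQ
      obtain ⟨⟨hq, h0, h1⟩, h2⟩ := hQ
      funext i
      fin_cases i
      · exact h0.symm
      · exact h1.symm
      · exact h2.symm
      · rfl
    · intro f2 _
      simp
  · intro Q hQ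
    simp only [Finset.coe_filter, Set.mem_ofPred_eq, quads, Finset.mem_filter, Finset.mem_univ,
        true_and] at hQ
    obtain ⟨hq, h0, h1⟩ := hQ
    rw [Finset.mem_coe, m1, ← h0, ← h1]
    exact ⟨hq 0 2, hq 1 2⟩

theorem quads_sum {n : ℕ} (g : PV n × PV n → ℕ) :
    ∑ Q ∈ quads n, g (Q 0, Q 1) = (2 ^ (2 * n) / 2 ^ 2) * (2 ^ (2 * n) / 2 ^ 3) *
      ∑ p ∈ (prs n).filter (fun p => symp p.1 p.2 = 0), g p := by
  rw [← Finset.sum_fiberwise_of_maps_to (s := quads n)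
    (t := (prs n).filter (fun p => symp p.1 p.2 = 0)) (g := fun Q => (Q 0, Q 1)), Finset.mul_sum]
  · refine Finset.sum_congr rfl fun p hp => ?_
    simp only [prs, Finset.mem_filter, Finset.mem_univ, true_and] at hp
    rw [← quads_fiber hp.1.1 hp.1.2.1 hp.1.2.2 hp.2, ← smul_eq_mul, ← Finset.sum_const]
    refine Finset.sum_congr ?_ fun Q hQ => ?_
    · ext Q
      simp [Prod.ext_iff]
    · simp only [Finset.mem_filter] at hQ
      have e : (Q 0, Q 1) = p := Prod.ext hQ.2.1 hQ.2.2
      rw [e]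
  · intro Q hQ
    simp only [quads, prs, Finset.mem_filter, Finset.mem_univ, true_and] at hQ ⊢
    have e02 : symp (Q 0) (Q 2) = 1 := hQ 0 2
    have e13 : symp (Q 1) (Q 3) = 1 := hQ 1 3
    have e03 : symp (Q 0) (Q 3) = 0 := hQ 0 3
    refine ⟨⟨?_, ?_, ?_⟩, hQ 0 1⟩
    · intro h; rw [h, symp_zero_left] at e02; exact zero_ne_one e02
    · intro h; rw [h, symp_zero_left] at e13; exact zero_ne_one e13
    · intro h; rw [h, e13] at e03; exact one_ne_zero e03

/-- At least a fifth of the isotropic planes violate any assignment. -/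
theorem bad_planes {n : ℕ} (hn : 3 ≤ n) (F : PV n → F2) :
    #{t : Submodule F2 (PV n) | t ∈ Lset n 2} ≤
      5 * #{t : Submodule F2 (PV n) | t ∈ Lset n 2 ∧ ¬ GoodOn F t} := by
  have hiso : ∀ p : PV n × PV n, IsIsotropic (Submodule.span F2 {p.1, p.2}) ↔ symp p.1 p.2 = 0 := by
    intro p
    constructor
    · intro h
      exact h _ (Submodule.subset_span (by simp)) _ (Submodule.subset_span (by simp))
    · intro h x hx y hy
      obtain ⟨a, b, rfl⟩ := Submodule.mem_span_pair.1 hx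
      obtain ⟨c, d, rfl⟩ := Submodule.mem_span_pair.1 hy
      simp [symp_add_left, symp_add_right, symp_smul_left, symp_smul_right, symp_self, h,
        symp_comm p.2 p.1]
  have hsum : ∀ g : Submodule F2 (PV n) → ℕ,
      ∑ Q ∈ quads n, g (Submodule.span F2 {Q 0, Q 1}) =
      (2 ^ (2 * n) / 2 ^ 2) * (2 ^ (2 * n) / 2 ^ 3) * (6 *
        ∑ t ∈ ({t : Submodule F2 (PV n) | t ∈ Lset n 2} : Finset _), g t) := by
    intro g
    rw [quads_sum (fun p => g (Submodule.span F2 {p.1, p.2}))]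
    congr 1
    have := prs_sum (fun t : Submodule F2 (PV n) => if IsIsotropic t then g t else 0)
    simp only [hiso] at this
    rw [← Finset.sum_filter, ← Finset.sum_filter, Finset.filter_filter] at this
    rw [this]
    congr 1
    refine Finset.sum_congr ?_ fun _ _ => rfl
    ext t
    simp only [Finset.mem_filter, Finset.mem_univ, true_and]
    exact ⟨fun h => ⟨h.2, h.1⟩, fun h => ⟨h.2, h.1⟩⟩
  have hKpos : 0 < (2 ^ (2 * n) / 2 ^ 2) * (2 ^ (2 * n) / 2 ^ 3) := by
    rw [Nat.pow_div (by omega) (by norm_num), Nat.pow_div (by omega) (by norm_num)]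
    positivity
  set K := (2 ^ (2 * n) / 2 ^ 2) * (2 ^ (2 * n) / 2 ^ 3) with hK
  have hone := hsum (fun _ => 1)
  have hbad := hsum (badI F)
  have h15 : ∑ Q ∈ quads n, ∑ j, badI F (Submodule.span F2 {act (dMat j) Q 0, act (dMat j) Q 1})
      = 15 * ∑ Q ∈ quads n, badI F (Submodule.span F2 {Q 0, Q 1}) := by
    rw [Finset.sum_comm]
    rw [Finset.sum_congr rfl fun j _ =>
      act_sum j (fun Q : Fin 4 → PV n => badI F (Submodule.span F2 {Q 0, Q 1}))]
    simp
  have h3 : 3 * ∑ Q ∈ quads n, 1 ≤ ∑ Q ∈ quads n, ∑ j,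
      badI F (Submodule.span F2 {act (dMat j) Q 0, act (dMat j) Q 1}) := by
    rw [Finset.mul_sum]
    exact Finset.sum_le_sum fun Q hQ => doily F hQ
  rw [h15, hbad, hone] at h3
  have hb : ∑ t ∈ ({t : Submodule F2 (PV n) | t ∈ Lset n 2} : Finset _), badI F t
      = #{t : Submodule F2 (PV n) | t ∈ Lset n 2 ∧ ¬ GoodOn F t} := by
    rw [← Finset.filter_filter, Finset.card_filter]
    refine Finset.sum_congr rfl fun t _ => ?_
    by_cases h : GoodOn F t <;> simp [badI, h]
  rw [hb, Finset.sum_const, smul_eq_mul, mul_one] at h3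
  refine Nat.le_of_mul_le_mul_left ?_ (Nat.mul_pos hKpos (show 0 < 18 by norm_num))
  calc _ = 3 * (K * (6 * #{t : Submodule F2 (PV n) | t ∈ Lset n 2})) := by ring
    _ ≤ _ := h3
    _ = _ := by ring

/-! ### Part D: assembly -/

theorem card_BVtx {n : ℕ} (P : Submodule F2 (PV n) → Prop)
    {i1 : DecidablePred P} {i2 : DecidablePred fun y : BVtx n => P y.1}
    (hP : ∀ S, P S → S ∈ Lset n n ∪ Lset n 2) :
    (@Finset.filter (BVtx n) (fun y => P y.1) i2 Finset.univ).card =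
      (@Finset.filter (Submodule F2 (PV n)) P i1 Finset.univ).card := by
  refine Finset.card_bij (fun y _ => y.1) ?_ ?_ ?_
  · intro y hy
    simpa using hy
  · intro y _ z _ h
    exact Subtype.ext h
  · intro S hS
    simp only [Finset.mem_filter, Finset.mem_univ, true_and] at hS
    exact ⟨⟨S, hP S hS⟩, by simpa using hS, rfl⟩

theorem natCard_set {n : ℕ} (D : Set (Submodule F2 (PV n))) :
    Nat.card D = #{S : Submodule F2 (PV n) | S ∈ D} := by
  rw [Nat.card_eq_fintype_card]
  exact Fintype.card_subtype _

theorem card_filter_dec {α : Type*} [Fintype α] (P : α → Prop) {i : DecidablePred P} :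
    (@Finset.filter α P i Finset.univ).card =
      (@Finset.filter α P (Classical.decPred P) Finset.univ).card := by
  congr!

/-- **Spectral incompleteness bound.** For `n ≥ 3`, `Pval(L^n) ≤ 4·(λ/Δ)²` where `Δ` is the
largest eigenvalue and `λ` the spectral parameter of the adjacency matrix of `B_{n,2}`. -/
theorem pval_le_spectral_bound :
    ∀ n : ℕ, 3 ≤ n →
      ∀ D ⊆ Lset n n,
        (∃ f : (S : Submodule F2 (PV n)) → (S → F2),
            (∀ S ∈ D, IsOutcome S (f S)) ∧
            (∀ S₁ ∈ D, ∀ S₂ ∈ D, ConsistentOn (f S₁) (f S₂))) →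
        (Nat.card D : ℝ) / (Nat.card (Lset n n) : ℝ) ≤
          4 * (specParam (adjB n) / maxEig (adjB n)) ^ 2 := by
  intro n hn D hD ⟨f, hf, hcons⟩
  by_cases hDne : D.Nonempty
  swap
  · rw [Set.not_nonempty_iff_eq_empty] at hDne
    subst hDne
    simp only [Nat.card_eq_fintype_card, Fintype.card_eq_zero, Nat.cast_zero, zero_div]
    positivity
  obtain ⟨X0, hX0D⟩ := hDne
  have hX0 := hD hX0D
  have hdisj : ∀ S : Submodule F2 (PV n), S ∈ Lset n 2 → S ∉ Lset n n := by
    intro S h2 h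
    have := h2.2
    have := h.2
    omega
  have hlt : ∀ S X : Submodule F2 (PV n), S ∈ Lset n 2 → X ∈ Lset n n → (S < X ↔ S ≤ X) := by
    intro S X hS hX
    refine ⟨le_of_lt, fun h => lt_of_le_of_ne h ?_⟩
    rintro rfl
    exact hdisj _ hS hX
  have hnotL : ∀ y : BVtx n, ¬ (y.1 ∈ Lset n n) ↔ y.1 ∈ Lset n 2 := by
    intro y
    constructor
    · intro h; exact y.2.resolve_left h
    · exact hdisj _
  have hadjL : ∀ x y : BVtx n, x.1 ∈ Lset n n →
      (BAdj x y ↔ y.1 ∈ Lset n 2 ∧ y.1 ≤ x.1) := by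
    intro x y hx
    constructor
    · rintro (⟨h, -, -⟩ | ⟨h1, -, h2⟩)
      · exact absurd hx (hdisj _ h)
      · exact ⟨h1, h2.le⟩
    · rintro ⟨h1, h2⟩
      exact Or.inr ⟨h1, hx, (hlt _ _ h1 hx).2 h2⟩
  have hadjR : ∀ x y : BVtx n, x.1 ∈ Lset n 2 →
      (BAdj x y ↔ y.1 ∈ Lset n n ∧ x.1 ≤ y.1) := by
    intro x y hx
    constructor
    · rintro (⟨-, h1, h2⟩ | ⟨-, h, -⟩)
      · exact ⟨h1, h2.le⟩
      · exact absurd h (hdisj _ hx)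
    · rintro ⟨h1, h2⟩
      exact Or.inl ⟨hx, h1, (hlt _ _ hx h1).2 h2⟩
  have hdeg : ∀ x : BVtx n, ∑ y, adjMat BAdj x y = (#{y : BVtx n | BAdj x y} : ℝ) := by
    intro x
    simp [adjMat]
  -- degrees
  set pl : Submodule F2 (PV n) → ℕ := fun X =>
    #{t : Submodule F2 (PV n) | Module.finrank F2 t = 2 ∧ t ≤ X} with hpl
  have hplc : ∀ X ∈ Lset n n, pl X = pl X0 := by
    intro X hX
    have h1 := card_planes X
    have h2 := card_planes X0
    rw [card_prsIn, hX.2] at h1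
    rw [card_prsIn, hX0.2] at h2
    simp only [hpl]
    omega
  have hplpos : 0 < pl X0 := by
    have h2 := card_planes X0
    rw [card_prsIn, hX0.2, ← Nat.mul_sub_one] at h2
    have h4 : 2 ^ 2 ≤ 2 ^ n := Nat.pow_le_pow_right (by norm_num) (by omega)
    have : 0 < (2 ^ n - 1) * (2 ^ n - 1 - 1) := by apply Nat.mul_pos <;> omega
    rw [← h2] at this
    exact Nat.pos_of_mul_pos_left this
  obtain ⟨r, hr⟩ := card_above n (n - 2) 2 (by omega)
  have hrpos : 0 < r := by
    obtain ⟨t, ht⟩ := Finset.card_pos.1 hplpos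
    simp only [Finset.mem_filter, Finset.mem_univ, true_and] at ht
    have ht2 : t ∈ Lset n 2 := ⟨fun x hx y hy => hX0.1 x (ht.2 hx) y (ht.2 hy), ht.1⟩
    rw [← hr t ht2]
    exact Finset.card_pos.2 ⟨X0, by simp [hX0, ht.2]⟩
  -- global assignment
  let F : PV n → F2 := fun v =>
    if h : ∃ S : Submodule F2 (PV n), S ∈ D ∧ v ∈ S then f h.choose ⟨v, h.choose_spec.2⟩ else 0
  have hF : ∀ S ∈ D, ∀ v (hv : v ∈ S), F v = f S ⟨v, hv⟩ := by
    intro S hS v hv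
    have h : ∃ S : Submodule F2 (PV n), S ∈ D ∧ v ∈ S := ⟨S, hS, hv⟩
    simp only [F, dif_pos h]
    exact hcons _ h.choose_spec.1 _ hS v _ hv
  have hgood : ∀ S ∈ D, ∀ t ≤ S, GoodOn F t := by
    intro S hS t ht x hx y hy
    rw [hF S hS x (ht hx), hF S hS y (ht hy), hF S hS (x + y) (S.add_mem (ht hx) (ht hy))]
    exact hf S hS ⟨x, ht hx⟩ ⟨y, ht hy⟩
  have hmain := abstract_bound (BAdj (n := n)) (fun x y h => Or.symm h)
    (fun x => x.1 ∈ Lset n n) (by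
      intro x y h
      rw [hnotL]
      constructor
      · intro hx; exact ((hadjL x y hx).1 h).1
      · intro hy; exact ((hadjR y x hy).1 (Or.symm h)).1) (pl X0) r (by exact_mod_cast hplpos)
    (by exact_mod_cast hrpos) (by
      intro x hx
      rw [hdeg, ← hplc x.1 hx]
      congr 1
      simp only [hpl]
      rw [← card_BVtx (fun t => Module.finrank F2 t = 2 ∧ t ≤ x.1) (i2 := Classical.decPred _)]
      · congr 1
        ext y
        simp only [Finset.mem_filter, Finset.mem_univ, true_and]
        rw [hadjL x y hx]
        constructor
        · rintro ⟨h1, h2⟩; exact ⟨h1.2, h2⟩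
        · rintro ⟨h1, h2⟩; exact ⟨⟨fun a ha b hb => hx.1 a (h2 ha) b (h2 hb), h1⟩, h2⟩
      · rintro S ⟨h1, h2⟩
        exact Or.inr ⟨fun a ha b hb => hx.1 a (h2 ha) b (h2 hb), h1⟩) (by
      intro x hx
      rw [hnotL] at hx
      rw [hdeg, ← hr x.1 hx]
      congr 1
      rw [← card_BVtx (fun X => X ∈ Lset n n ∧ x.1 ≤ X) (i2 := Classical.decPred _) (fun S h => Or.inl h.1)]
      congr 1
      ext y
      simp only [Finset.mem_filter, Finset.mem_univ, true_and]
      rw [hadjR x y hx]) (by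
      intro ψ hψ x y hx hy
      have := lag_conn hn (fun S => if h : S ∈ Lset n n ∪ Lset n 2 then ψ ⟨S, h⟩ else 0) (by
        intro X hX Y hY t ht htX htY
        have hX' : X ∈ Lset n n ∪ Lset n 2 := Or.inl hX
        have hY' : Y ∈ Lset n n ∪ Lset n 2 := Or.inl hY
        have ht' : t ∈ Lset n n ∪ Lset n 2 := Or.inr ht
        simp only [dif_pos hX', dif_pos hY']
        exact hψ ⟨X, hX'⟩ ⟨Y, hY'⟩ ⟨t, ht'⟩ hX hY ((hadjR ⟨t, ht'⟩ ⟨X, hX'⟩ ht).2 ⟨hX, htX⟩)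
          ((hadjR ⟨t, ht'⟩ ⟨Y, hY'⟩ ht).2 ⟨hY, htY⟩)) n x.1 hx y.1 hy (by omega)
      simpa only [dif_pos x.2, dif_pos y.2] using this)
    {x | x.1 ∈ D} {t | t.1 ∈ Lset n 2 ∧ GoodOn F t.1}
    (by
      intro x hx
      simp only [Finset.mem_filter, Finset.mem_univ, true_and] at hx
      exact hD hx)
    ⟨⟨X0, Or.inl hX0⟩, by simpa using hX0D⟩
    (by
      intro x hx
      simp only [Finset.mem_filter, Finset.mem_univ, true_and] at hx
      exact hdisj _ hx.1)
    (by
      intro x hx t ht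
      simp only [Finset.mem_filter, Finset.mem_univ, true_and] at hx ⊢
      have h := (hadjL x t (hD hx)).1 ht
      exact ⟨h.1, hgood _ hx _ h.2⟩)
    (by
      have hb := bad_planes hn F
      simp only [hnotL]
      rw [card_BVtx (fun t => t ∈ Lset n 2 ∧ GoodOn F t) (i1 := Classical.decPred _) (fun S h => Or.inr h.1),
        card_BVtx (fun t => t ∈ Lset n 2) (i1 := Classical.decPred _) (fun S h => Or.inr h)]
      have hsplit := Finset.card_filter_add_card_filter_not
        (s := ({t : Submodule F2 (PV n) | t ∈ Lset n 2} : Finset _)) (fun t => GoodOn F t)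
      rw [Finset.filter_filter, Finset.filter_filter,
        card_filter_dec (fun t => t ∈ Lset n 2 ∧ GoodOn F t)] at hsplit
      norm_cast
      omega)
  rw [card_BVtx (fun t => t ∈ D) (i1 := Classical.decPred _) (fun S h => Or.inl (hD h)),
    card_BVtx (fun t => t ∈ Lset n n) (i1 := Classical.decPred _) (fun S h => Or.inl h)] at hmain
  rw [natCard_set, natCard_set]
  have hadjB : adjB n = adjMat (BAdj (n := n)) := by
    ext x y
    simp only [adjB, adjMat, Matrix.of_apply]
  rw [hadjB]
  convert hmain
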